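/- arXiv:1910.14555 — 2 statements merged into one kernel-verified Lean document; each statement's English description precedes it below -/
import Mathlib

section
/- Let (Ω,Σ,μ) be a finite measure space, Z a real Banach space, and X ⊆ Z* a norm-closed subspace which is norming for Z. Suppose that Z equipped with the topology σ(Z,X) has the Mazur property. If ν : Σ → Z* is a countably additive μ-continuous vector measure satisfying condition (G), then ν(A) ∈ X for every A ∈ Σ. -/
open MeasureTheory Filter Set Topology
open scoped UniformConvergence

noncomputable section

/-- The topology `σ(Z,X)` on `Z` of pointwise convergence on a subspace `X ⊆ Z*`. -/
def sigmaTop {Z : Type*} [NormedAddCommGroup Z] [NormedSpace ℝ Z]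
    (X : Submodule ℝ (Z →L[ℝ] ℝ)) : TopologicalSpace Z :=
  TopologicalSpace.induced (fun z => fun x : X => (x : Z →L[ℝ] ℝ) z) Pi.topologicalSpace

/-- The weak* topology on the dual of `E`: pointwise convergence on `E`. -/
def wstarTop (E : Type*) [NormedAddCommGroup E] [NormedSpace ℝ E] :
    TopologicalSpace (E →L[ℝ] ℝ) :=
  TopologicalSpace.induced (fun f => (f : E → ℝ)) Pi.topologicalSpace

/-- A norm-closed subspace `X ⊆ Z*` is norming for `Z` if
`|||z||| = sup {⟨x,z⟩ : x ∈ B_X}` is an equivalent norm on `Z`; since this sup is always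
`≤ ‖z‖`, this amounts to the existence of `c > 0` with `c⬝‖z‖ ≤ |||z|||` for all `z`. -/
def IsNorming {Z : Type*} [NormedAddCommGroup Z] [NormedSpace ℝ Z]
    (X : Submodule ℝ (Z →L[ℝ] ℝ)) : Prop :=
  ∃ c > (0 : ℝ), ∀ z : Z, c * ‖z‖ ≤ sSup {r : ℝ | ∃ x ∈ X, ‖x‖ ≤ 1 ∧ r = x z}

/-- The average range `𝒜_ν(A) = {ν(B)/μ(B) : B ∈ Σ, B ⊆ A, μ(B) > 0}`. -/
def avgRange {Ω : Type*} [MeasurableSpace Ω] {Z : Type*} [NormedAddCommGroup Z]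
    [NormedSpace ℝ Z] (μ : Measure Ω) (ν : VectorMeasure Ω (Z →L[ℝ] ℝ)) (A : Set Ω) :
    Set (Z →L[ℝ] ℝ) :=
  {w | ∃ B : Set Ω, MeasurableSet B ∧ B ⊆ A ∧ 0 < μ B ∧ w = (μ B).toReal⁻¹ • ν B}

/-- Condition (G): for every `A ∈ Σ` with `μ(A) > 0`, the `w*`-closed convex hull of the
average range `𝒜_ν(A)` intersects `X`. -/
def CondG {Ω : Type*} [MeasurableSpace Ω] {Z : Type*} [NormedAddCommGroup Z]
    [NormedSpace ℝ Z] (μ : Measure Ω) (ν : VectorMeasure Ω (Z →L[ℝ] ℝ))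
    (X : Submodule ℝ (Z →L[ℝ] ℝ)) : Prop :=
  ∀ A : Set Ω, MeasurableSet A → 0 < μ A →
    (@closure _ (wstarTop Z) (convexHull ℝ (avgRange μ ν A)) ∩
      (X : Set (Z →L[ℝ] ℝ))).Nonempty

/-- `h` is a convex block subsequence of `g`: `h k = ∑_{n ∈ I k} a n • g n` where the finite
sets `I k` satisfy `max (I k) < min (I (k+1))` and the `a n` are non-negative reals summing
to `1` over each `I k`. -/
def ConvexBlock {E : Type*} [AddCommMonoid E] [Module ℝ E] (g h : ℕ → E) : Prop :=
  ∃ (I : ℕ → Finset ℕ) (a : ℕ → ℝ),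
    (∀ k, ∀ n ∈ I k, ∀ m ∈ I (k + 1), n < m) ∧
    (∀ n, 0 ≤ a n) ∧ (∀ k, ∑ n ∈ I k, a n = 1) ∧
    (∀ k, h k = ∑ n ∈ I k, a n • g n)

/-- `(B_{X*}, w*)` is convex block compact: every sequence in the closed unit ball of `X*`
admits a convex block subsequence which is `w*`-convergent. -/
def DualBallConvexBlockCompact (X : Type*) [NormedAddCommGroup X] [NormedSpace ℝ X] : Prop :=
  ∀ g : ℕ → (X →L[ℝ] ℝ), (∀ n, ‖g n‖ ≤ 1) →
    ∃ h : ℕ → (X →L[ℝ] ℝ), ConvexBlock g h ∧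
      ∃ f : X →L[ℝ] ℝ, Tendsto h atTop (@nhds _ (wstarTop X) f)

/-!
The densities `d(φ ∘ ν)/dμ ∈ L¹(μ)` depend weak*-to-weak continuously on `φ ∈ Z**`: the dual of
`L¹(μ)` is `L∞(μ)`, the norm-closed span of the indicators, and integrating the density over `B`
gives the evaluation `φ ↦ φ (ν B)`.

Let `z n → 0` pointwise on `X`; by Banach-Steinhaus the sequence is bounded, since `X` is norming.
Let `Φ ∈ Z**` be a weak* cluster point of it, and suppose `Φ (ν A) > 0`. The density of `Φ` is at
least some `δ > 0` on a set of positive measure, and it is a weak cluster point of the densities of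
the `z n`, so by Mazur's lemma it is the `L¹`-limit of the densities of convex combinations `y n` of
tails of `z`. By Egorov, the latter are at least `δ / 2` on a set `B` of positive measure for
infinitely many `n`, and then so is every functional in the weak*-closed convex hull of the average
range `𝒜_ν(B)` at `y n`. By (G), one of these functionals lies in `X`, contradicting `y n → 0`
pointwise on `X`. Hence `ν A` is sequentially `σ(Z,X)`-continuous, and the Mazur property applies.
-/

section LinftyDensity

lemma exists_simpleFunc_dist_lt_of_isCompact {α : Type*} [PseudoMetricSpace α]
    [TopologicalSpace.SeparableSpace α] [Nonempty α] [MeasurableSpace α] [OpensMeasurableSpace α]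
    {K : Set α} (hK : IsCompact K) {ε : ℝ} (hε : 0 < ε) :
    ∃ g : SimpleFunc α α, ∀ x ∈ K, dist (g x) x < ε := by
  let e := TopologicalSpace.denseSeq α
  have hcover : K ⊆ ⋃ k, Metric.ball (e k) ε := fun x _ =>
    mem_iUnion.2 ((TopologicalSpace.denseRange_denseSeq α).exists_dist_lt x hε)
  obtain ⟨t, ht⟩ := hK.elim_finite_subcover _ (fun _ => Metric.isOpen_ball) hcover
  refine ⟨SimpleFunc.nearestPt e (t.sup id), fun x hx => ?_⟩
  obtain ⟨k, hkt, hk⟩ := mem_iUnion₂.1 (ht hx)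
  rw [← edist_lt_ofReal]
  calc edist (SimpleFunc.nearestPt e (t.sup id) x) x
      ≤ edist (e k) x := SimpleFunc.edist_nearestPt_le e x (Finset.le_sup (f := id) hkt)
    _ < ENNReal.ofReal ε := edist_lt_ofReal.2 (Metric.mem_ball'.1 hk)

variable {Ω : Type*} [MeasurableSpace Ω] {μ : Measure Ω}

lemma ae_norm_le_norm_Lp_top {E : Type*} [NormedAddCommGroup E] (h : Lp E ⊤ μ) :
    ∀ᵐ x ∂μ, ‖h x‖ ≤ ‖h‖ := by
  filter_upwards [ae_le_eLpNormEssSup (f := h) (μ := μ)] with x hx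
  rw [Lp.norm_def, eLpNorm_exponent_top, ← toReal_enorm]
  exact ENNReal.toReal_mono (eLpNorm_exponent_top (f := h) ▸ Lp.eLpNorm_ne_top h) hx

lemma exists_simpleFunc_norm_toLp_sub_lt [IsFiniteMeasure μ] {E : Type*} [NormedAddCommGroup E]
    [ProperSpace E] (h : Lp E ⊤ μ) {ε : ℝ} (hε : 0 < ε) :
    ∃ g : SimpleFunc Ω E, ‖(g.memLp_of_isFiniteMeasure ⊤ μ).toLp g - h‖ < ε := by
  borelize E
  obtain ⟨g, hg⟩ := exists_simpleFunc_dist_lt_of_isCompact (isCompact_closedBall (0 : E) ‖h‖)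
    (half_pos hε)
  refine ⟨g.comp h (Lp.stronglyMeasurable h).measurable, lt_of_le_of_lt ?_ (half_lt_self hε)⟩
  refine (Lp.norm_le_of_ae_bound (half_pos hε).le ?_).trans_eq (by simp)
  filter_upwards [ae_norm_le_norm_Lp_top h, Lp.coeFn_sub (MemLp.toLp _ _) h,
    (SimpleFunc.memLp_of_isFiniteMeasure (g.comp h (Lp.stronglyMeasurable h).measurable) ⊤
      μ).coeFn_toLp] with x hx hsub hcomp
  rw [hsub, Pi.sub_apply, hcomp, SimpleFunc.coe_comp, Function.comp_apply, ← dist_eq_norm]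
  exact (hg _ (mem_closedBall_zero_iff.2 hx)).le

lemma eq_top_of_indicatorConstLp_mem [IsFiniteMeasure μ] {E : Type*} [NormedAddCommGroup E]
    [ProperSpace E] {W : AddSubgroup (Lp E ⊤ μ)} (hW : IsClosed (W : Set (Lp E ⊤ μ)))
    (hind : ∀ (s : Set Ω) (hs : MeasurableSet s) (c : E),
      indicatorConstLp ⊤ hs (measure_ne_top μ s) c ∈ W) : W = ⊤ := by
  have hsimple : ∀ g : SimpleFunc Ω E, (g.memLp_of_isFiniteMeasure ⊤ μ).toLp g ∈ W := by
    intro g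
    induction g using SimpleFunc.induction with
    | @const c s hs =>
      convert hind s hs c using 1
      rw [indicatorConstLp]
      congr 1
    | @add f g _ hf hg => exact W.add_mem hf hg
  refine (AddSubgroup.eq_top_iff' W).2 fun h => hW.closure_subset (Metric.mem_closure_iff.2 ?_)
  intro ε hε
  obtain ⟨g, hg⟩ := exists_simpleFunc_norm_toLp_sub_lt h hε
  exact ⟨_, hsimple g, by rwa [dist_comm, dist_eq_norm]⟩

end LinftyDensity

section DualOfL1

variable {Ω : Type*} [MeasurableSpace Ω] {μ : Measure Ω}

variable (μ) in
/-- The functional `f ↦ ∫ x in s, f x ∂μ` on `L¹(μ)`. For finite `μ` these functionals span a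
norm-dense subspace of the dual of `L¹(μ)`. -/
def setIntegralCLM (s : Set Ω) : Lp ℝ 1 μ →L[ℝ] ℝ :=
  (L1.integralCLM (E := ℝ)).comp (LpToLpRestrictCLM Ω ℝ ℝ μ 1 s)

lemma setIntegralCLM_apply (s : Set Ω) (f : Lp ℝ 1 μ) :
    setIntegralCLM μ s f = ∫ x in s, f x ∂μ := by
  have h := L1.integral_eq_integral (LpToLpRestrictCLM Ω ℝ ℝ μ 1 s f)
  rw [L1.integral_eq, integral_congr_ae (LpToLpRestrictCLM_coeFn ℝ s f)] at h
  exact h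

lemma ae_norm_le_of_forall_abs_setIntegral_le [IsFiniteMeasure μ] {f : Ω → ℝ}
    (hf : Integrable f μ) {C : ℝ}
    (h : ∀ s, MeasurableSet s → |∫ x in s, f x ∂μ| ≤ C * μ.real s) :
    ∀ᵐ x ∂μ, ‖f x‖ ≤ C := by
  have hupper : f ≤ᵐ[μ] fun _ => C := by
    refine ae_le_of_forall_setIntegral_le hf (integrable_const _) fun s hs _ => ?_
    rw [setIntegral_const, smul_eq_mul, mul_comm]
    exact (abs_le.1 (h s hs)).2
  have hlower : (fun _ => -C) ≤ᵐ[μ] f := by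
    refine ae_le_of_forall_setIntegral_le (integrable_const _) hf fun s hs _ => ?_
    rw [setIntegral_const, smul_eq_mul, mul_neg, mul_comm]
    exact (abs_le.1 (h s hs)).1
  filter_upwards [hupper, hlower] with x hx hx'
  exact abs_le.2 ⟨hx', hx⟩

lemma const_smul_indicatorConstLp {p : ENNReal} {E : Type*} [NormedAddCommGroup E]
    [NormedSpace ℝ E] {s : Set Ω} (hs : MeasurableSet s) (hμs : μ s ≠ ⊤) (c : ℝ) (a : E) :
    c • indicatorConstLp p hs hμs a = indicatorConstLp p hs hμs (c • a) := by
  rw [indicatorConstLp, ← MemLp.toLp_const_smul]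
  exact MemLp.toLp_congr _ _ (.of_forall fun x => (indicator_const_smul_apply s c _ x).symm)

lemma continuousLinearMap_ext_indicatorConstLp {p : ENNReal} [Fact (1 ≤ p)] (hp : p ≠ ⊤)
    {F : Type*} [NormedAddCommGroup F] [NormedSpace ℝ F] {l₁ l₂ : Lp ℝ p μ →L[ℝ] F}
    (h : ∀ (s : Set Ω) (hs : MeasurableSet s) (hμs : μ s ≠ ⊤),
      l₁ (indicatorConstLp p hs hμs 1) = l₂ (indicatorConstLp p hs hμs 1)) : l₁ = l₂ := by
  ext f
  induction f using Lp.induction hp with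
  | @indicatorConst c s hs hμs =>
    rw [Lp.simpleFunc.coe_indicatorConst, ← mul_one c, ← smul_eq_mul,
      ← const_smul_indicatorConstLp, map_smul, map_smul, h]
  | add hf hg _ ihf ihg => rw [map_add, map_add, ihf, ihg]
  | isClosed => exact isClosed_eq l₁.continuous l₂.continuous

lemma lpPairing_mul_indicatorConstLp_left [IsFiniteMeasure μ] {s : Set Ω} (hs : MeasurableSet s)
    (c : ℝ) :
    (ContinuousLinearMap.mul ℝ ℝ).lpPairing μ ⊤ 1 (indicatorConstLp ⊤ hs (measure_ne_top μ s) c) =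
      c • setIntegralCLM μ s := by
  ext f
  rw [ContinuousLinearMap.lpPairing_eq_integral, _root_.smul_apply, setIntegralCLM_apply,
    smul_eq_mul, ← integral_const_mul, ← integral_indicator hs]
  refine integral_congr_ae ?_
  filter_upwards [indicatorConstLp_coeFn (p := ⊤) (hs := hs) (hμs := measure_ne_top μ s)
    (c := c)] with x hx
  rw [hx]
  by_cases hxs : x ∈ s <;> simp [hxs]

lemma exists_continuousLinearMap_Lp_two_one_indicatorConstLp [IsFiniteMeasure μ] :
    ∃ J : Lp ℝ 2 μ →L[ℝ] Lp ℝ 1 μ, ∀ (s : Set Ω) (hs : MeasurableSet s),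
      J (indicatorConstLp 2 hs (measure_ne_top μ s) 1) =
        indicatorConstLp 1 hs (measure_ne_top μ s) 1 := by
  refine ⟨(ContinuousLinearMap.mul ℝ ℝ).holderL μ 2 2 1 (Lp.const 2 μ 1), fun s hs => ?_⟩
  ext1
  rw [ContinuousLinearMap.holderL_apply_apply]
  filter_upwards [(ContinuousLinearMap.mul ℝ ℝ).coeFn_holder (r := 1) (Lp.const 2 μ (1 : ℝ))
      (indicatorConstLp 2 hs (measure_ne_top μ s) 1), Lp.coeFn_const (p := 2) (μ := μ) (1 : ℝ),
    indicatorConstLp_coeFn (p := 2) (hs := hs) (hμs := measure_ne_top μ s) (c := (1 : ℝ)),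
    indicatorConstLp_coeFn (p := 1) (hs := hs) (hμs := measure_ne_top μ s) (c := (1 : ℝ))]
    with x hmul hconst hind₂ hind₁
  rw [hmul, hconst, hind₂, hind₁]
  simp

lemma exists_integrable_apply_indicatorConstLp_eq_setIntegral [IsFiniteMeasure μ]
    (l : Lp ℝ 1 μ →L[ℝ] ℝ) :
    ∃ f : Ω → ℝ, Integrable f μ ∧ ∀ (s : Set Ω) (hs : MeasurableSet s),
      l (indicatorConstLp 1 hs (measure_ne_top μ s) 1) = ∫ x in s, f x ∂μ := by
  obtain ⟨J, hJ⟩ := exists_continuousLinearMap_Lp_two_one_indicatorConstLp (μ := μ)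
  let f : Lp ℝ 2 μ := (InnerProductSpace.toDual ℝ _).symm (l.comp J)
  refine ⟨f, (Lp.memLp f).integrable one_le_two, fun s hs => ?_⟩
  rw [← L2.inner_indicatorConstLp_one (𝕜 := ℝ) hs (measure_ne_top μ s) f, real_inner_comm,
    InnerProductSpace.toDual_symm_apply, ContinuousLinearMap.comp_apply, hJ]

theorem surjective_lpPairing_mul_top_one [IsFiniteMeasure μ] :
    Function.Surjective ((ContinuousLinearMap.mul ℝ ℝ).lpPairing μ ⊤ 1) := by
  intro l
  obtain ⟨f, hf, hlf⟩ := exists_integrable_apply_indicatorConstLp_eq_setIntegral l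
  have hbound : ∀ᵐ x ∂μ, ‖f x‖ ≤ ‖l‖ := by
    refine ae_norm_le_of_forall_abs_setIntegral_le hf fun s hs => ?_
    calc |∫ x in s, f x ∂μ|
        = ‖l (indicatorConstLp 1 hs (measure_ne_top μ s) 1)‖ := by rw [hlf s hs, Real.norm_eq_abs]
      _ ≤ ‖l‖ * ‖indicatorConstLp 1 hs (measure_ne_top μ s) (1 : ℝ)‖ := l.le_opNorm _
      _ = ‖l‖ * μ.real s := by simp [norm_indicatorConstLp]
  have hmem : MemLp f ⊤ μ := memLp_top_of_bound hf.aestronglyMeasurable _ hbound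
  refine ⟨hmem.toLp f, continuousLinearMap_ext_indicatorConstLp ENNReal.one_ne_top
    fun s hs _ => ?_⟩
  rw [hlf s hs, ContinuousLinearMap.lpPairing_eq_integral, ← integral_indicator hs]
  refine integral_congr_ae ?_
  filter_upwards [hmem.coeFn_toLp, indicatorConstLp_coeFn (p := 1) (hs := hs)
    (hμs := measure_ne_top μ s) (c := (1 : ℝ))] with x hfx hind
  rw [hfx, hind]
  by_cases hxs : x ∈ s <;> simp [hxs]

theorem eq_top_of_setIntegralCLM_mem [IsFiniteMeasure μ]
    {V : Submodule ℝ (Lp ℝ 1 μ →L[ℝ] ℝ)} (hV : IsClosed (V : Set (Lp ℝ 1 μ →L[ℝ] ℝ)))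
    (hint : ∀ s, MeasurableSet s → setIntegralCLM μ s ∈ V) : V = ⊤ := by
  let P := (ContinuousLinearMap.mul ℝ ℝ).lpPairing μ ⊤ 1
  have htop : (V.comap P.toLinearMap).toAddSubgroup = ⊤ := by
    refine eq_top_of_indicatorConstLp_mem (hV.preimage P.continuous) fun s hs c => ?_
    change P _ ∈ V
    rw [lpPairing_mul_indicatorConstLp_left hs c]
    exact V.smul_mem c (hint s hs)
  refine V.eq_top_iff'.2 fun l => ?_
  obtain ⟨h, rfl⟩ := surjective_lpPairing_mul_top_one l
  exact (AddSubgroup.eq_top_iff' _).1 htop h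

end DualOfL1

section DualDensity

variable {Ω : Type*} [MeasurableSpace Ω] {μ : Measure Ω}

lemma Lp_one_ext_setIntegralCLM {f g : Lp ℝ 1 μ}
    (h : ∀ s, MeasurableSet s → setIntegralCLM μ s f = setIntegralCLM μ s g) : f = g := by
  refine Lp.ext (Integrable.ae_eq_of_forall_setIntegral_eq f g (L1.integrable_coeFn f)
    (L1.integrable_coeFn g) fun s hs _ => ?_)
  rw [← setIntegralCLM_apply, ← setIntegralCLM_apply, h s hs]

lemma exists_setIntegralCLM_eq_of_absolutelyContinuous [IsFiniteMeasure μ] {s : SignedMeasure Ω}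
    (hs : s ≪ᵥ μ.toENNRealVectorMeasure) :
    ∃ f : Lp ℝ 1 μ, ∀ B, MeasurableSet B → setIntegralCLM μ B f = s B := by
  have hint : Integrable (s.rnDeriv μ) μ := SignedMeasure.integrable_rnDeriv s μ
  refine ⟨hint.toL1 _, fun B hB => ?_⟩
  calc setIntegralCLM μ B (hint.toL1 _)
      = ∫ x in B, s.rnDeriv μ x ∂μ := by
        rw [setIntegralCLM_apply]
        exact integral_congr_ae (ae_restrict_of_ae hint.coeFn_toL1)
    _ = s B := by
        rw [← withDensityᵥ_apply hint hB, SignedMeasure.withDensityᵥ_rnDeriv_eq s μ hs]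

variable {E : Type*} [NormedAddCommGroup E] [NormedSpace ℝ E] {ν : VectorMeasure Ω E}

lemma exists_setIntegralCLM_eq_apply [IsFiniteMeasure μ] (hν : ν ≪ᵥ μ.toENNRealVectorMeasure) :
    ∃ D : StrongDual ℝ E →L[ℝ] Lp ℝ 1 μ, ∀ φ B, MeasurableSet B →
      setIntegralCLM μ B (D φ) = φ (ν B) := by
  have hexists (φ : StrongDual ℝ E) :
      ∃ f : Lp ℝ 1 μ, ∀ B, MeasurableSet B → setIntegralCLM μ B f = φ (ν B) :=
    exists_setIntegralCLM_eq_of_absolutelyContinuous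
      (s := ν.mapRange (φ : E →+ ℝ) φ.continuous) fun B hB => by
        change φ (ν B) = 0
        rw [hν hB, map_zero]
  choose d hd using hexists
  let D : StrongDual ℝ E →ₗ[ℝ] Lp ℝ 1 μ :=
    { toFun := d
      map_add' := fun φ ψ => Lp_one_ext_setIntegralCLM fun B hB => by
        rw [map_add, hd _ B hB, hd _ B hB, hd _ B hB, _root_.add_apply]
      map_smul' := fun c φ => Lp_one_ext_setIntegralCLM fun B hB => by
        rw [map_smul, hd _ B hB, hd _ B hB, _root_.smul_apply, RingHom.id_apply] }
  have hgraph (φ : ℕ → StrongDual ℝ E) (ψ : StrongDual ℝ E) (f : Lp ℝ 1 μ)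
      (hφ : Tendsto φ atTop (𝓝 ψ)) (hf : Tendsto (D ∘ φ) atTop (𝓝 f)) : f = D ψ := by
    refine Lp_one_ext_setIntegralCLM fun B hB => ?_
    have hleft := ((setIntegralCLM μ B).continuous.tendsto f).comp hf
    have hright : Tendsto (fun n => φ n (ν B)) atTop (𝓝 (ψ (ν B))) :=
      ((ContinuousLinearMap.apply ℝ ℝ (ν B)).continuous.tendsto ψ).comp hφ
    rw [show setIntegralCLM μ B (D ψ) = ψ (ν B) from hd ψ B hB]
    exact tendsto_nhds_unique hleft (hright.congr fun n => (hd (φ n) B hB).symm)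
  exact ⟨ContinuousLinearMap.ofSeqClosedGraph hgraph, hd⟩

/-- The operator taking `φ ∈ E*` to the Radon–Nikodym derivative `d(φ ∘ ν)/dμ ∈ L¹(μ)` of the
scalar measure `φ ∘ ν`; it is characterised by `setIntegralCLM_dualDensity`. -/
def dualDensity [IsFiniteMeasure μ] (hν : ν ≪ᵥ μ.toENNRealVectorMeasure) :
    StrongDual ℝ E →L[ℝ] Lp ℝ 1 μ :=
  (exists_setIntegralCLM_eq_apply hν).choose

lemma setIntegralCLM_dualDensity [IsFiniteMeasure μ] (hν : ν ≪ᵥ μ.toENNRealVectorMeasure)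
    (φ : StrongDual ℝ E) {B : Set Ω} (hB : MeasurableSet B) :
    setIntegralCLM μ B (dualDensity hν φ) = φ (ν B) :=
  (exists_setIntegralCLM_eq_apply hν).choose_spec φ B hB

lemma exists_forall_apply_dualDensity_eq [IsFiniteMeasure μ] [CompleteSpace E]
    (hν : ν ≪ᵥ μ.toENNRealVectorMeasure) (l : StrongDual ℝ (Lp ℝ 1 μ)) :
    ∃ e : E, ∀ φ, l (dualDensity hν φ) = φ e := by
  let ι := NormedSpace.inclusionInDoubleDualLi ℝ (E := E)
  let R : StrongDual ℝ (Lp ℝ 1 μ) →L[ℝ] StrongDual ℝ (StrongDual ℝ E) :=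
    (dualDensity hν).precomp ℝ
  have hclosed : IsClosed (range ι) := ι.isometry.isUniformInducing.isComplete_range.isClosed
  have htop : (LinearMap.range ι.toLinearMap).comap R.toLinearMap = ⊤ := by
    refine eq_top_of_setIntegralCLM_mem (hclosed.preimage R.continuous) fun B hB => ?_
    exact ⟨ν B, ContinuousLinearMap.ext fun φ => (setIntegralCLM_dualDensity hν φ hB).symm⟩
  obtain ⟨e, he⟩ : R l ∈ LinearMap.range ι.toLinearMap := (Submodule.eq_top_iff'.1 htop) l
  exact ⟨e, fun φ => (congr($he φ)).symm⟩

theorem continuous_toWeakSpace_dualDensity [IsFiniteMeasure μ] [CompleteSpace E]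
    (hν : ν ≪ᵥ μ.toENNRealVectorMeasure) :
    Continuous fun φ : WeakDual ℝ E =>
      toWeakSpace ℝ (Lp ℝ 1 μ) (dualDensity hν (WeakDual.toStrongDual φ)) := by
  refine WeakBilin.continuous_of_continuous_eval _ fun l => ?_
  obtain ⟨e, he⟩ := exists_forall_apply_dualDensity_eq hν l
  exact (WeakDual.eval_continuous e).congr fun φ => (he (WeakDual.toStrongDual φ)).symm

end DualDensity

section ConvexCombinations

variable {Z : Type*} [AddCommGroup Z] [Module ℝ Z]

lemma exists_convexHull_tendsto_of_mapClusterPt_toWeakSpace {F : Type*} [NormedAddCommGroup F]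
    [NormedSpace ℝ F] (T : Z →ₗ[ℝ] F) {z : ℕ → Z} {f : F}
    (hf : MapClusterPt (toWeakSpace ℝ F f) atTop fun n => toWeakSpace ℝ F (T (z n))) :
    ∃ y : ℕ → Z, (∀ n, y n ∈ convexHull ℝ (z '' Ici n)) ∧
      Tendsto (fun n => T (y n)) atTop (𝓝 f) := by
  have hmem (n : ℕ) : f ∈ closure (T '' convexHull ℝ (z '' Ici n)) := by
    have hconv : Convex ℝ (T '' convexHull ℝ (z '' Ici n)) :=
      (convex_convexHull ℝ _).linear_image T
    have hsub : (fun m => toWeakSpace ℝ F (T (z m))) '' Ici n ⊆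
        toWeakSpace ℝ F '' (T '' convexHull ℝ (z '' Ici n)) := by
      rintro _ ⟨m, hm, rfl⟩
      exact mem_image_of_mem _ (mem_image_of_mem _ (subset_convexHull ℝ _ (mem_image_of_mem z hm)))
    have hweak := closure_mono hsub (mapClusterPt_atTop_iff_forall_mem_closure.1 hf n)
    rw [← hconv.toWeakSpace_closure ℝ] at hweak
    exact (toWeakSpace ℝ F).injective.mem_set_image.1 hweak
  have hclose (n : ℕ) : ∃ y ∈ convexHull ℝ (z '' Ici n), dist (T y) f < 1 / (n + 1 : ℝ) := by
    obtain ⟨_, ⟨y, hy, rfl⟩, hlt⟩ := Metric.mem_closure_iff.1 (hmem n) _ Nat.one_div_pos_of_nat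
    exact ⟨y, hy, by rwa [dist_comm]⟩
  choose y hy hlt using hclose
  exact ⟨y, hy, tendsto_iff_dist_tendsto_zero.2 (squeeze_zero (fun _ => dist_nonneg)
    (fun n => (hlt n).le) tendsto_one_div_add_atTop_nhds_zero_nat)⟩

lemma eventually_apply_lt_of_forall_mem_convexHull (φ : Z →ₗ[ℝ] ℝ) {z y : ℕ → Z} {c : ℝ}
    (hz : ∀ᶠ n in atTop, φ (z n) < c) (hy : ∀ n, y n ∈ convexHull ℝ (z '' Ici n)) :
    ∀ᶠ n in atTop, φ (y n) < c := by
  filter_upwards [eventually_forall_ge_atTop.2 hz] with n hn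
  refine convexHull_min ?_ (convex_halfSpace_lt φ.isLinear c) (hy n)
  rintro _ ⟨m, hm, rfl⟩
  exact hn m hm

end ConvexCombinations

section Egorov

lemma exists_measurableSet_frequently_forall_le {Ω : Type*} [MeasurableSpace Ω] {μ : Measure Ω}
    {F : ℕ → Ω → ℝ} {f : Ω → ℝ}
    (hF : ∀ n, StronglyMeasurable (F n)) (hf : StronglyMeasurable f)
    (hFf : TendstoInMeasure μ F atTop f) {A : Set Ω} (hA : MeasurableSet A) (hμA : 0 < μ A)
    (hμA' : μ A ≠ ⊤) {c d : ℝ} (hcd : c < d) (hdf : ∀ x ∈ A, d ≤ f x) :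
    ∃ B ⊆ A, MeasurableSet B ∧ 0 < μ B ∧ ∃ᶠ n in atTop, ∀ x ∈ B, c ≤ F n x := by
  obtain ⟨k, hk, hkf⟩ := hFf.exists_seq_tendsto_ae
  obtain ⟨ε, -, hεA⟩ := ENNReal.lt_iff_exists_real_btwn.1 hμA
  obtain ⟨t, -, ht, hμt, hunif⟩ := tendstoUniformlyOn_of_ae_tendsto
    (fun n => hF (k n)) hf hA hμA' (hkf.mono fun x hx _ => hx) (ENNReal.ofReal_pos.1 hεA.1)
  refine ⟨A \ t, sdiff_subset, hA.diff ht, ?_, ?_⟩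
  · exact (tsub_pos_of_lt (hμt.trans_lt hεA.2)).trans_le le_measure_sdiff
  · refine hk.tendsto_atTop.frequently (Eventually.frequently ?_)
    filter_upwards [Metric.tendstoUniformlyOn_iff.1 hunif (d - c) (sub_pos.2 hcd)] with n hn x hx
    have hdist := (abs_lt.1 (Real.dist_eq _ _ ▸ hn x hx)).2
    linarith [hdf x hx.1]

end Egorov

section ConditionG

variable {Ω : Type*} [MeasurableSpace Ω] {μ : Measure Ω} [IsFiniteMeasure μ]
  {Z : Type*} [NormedAddCommGroup Z] [NormedSpace ℝ Z] {ν : VectorMeasure Ω (Z →L[ℝ] ℝ)}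
  {X : Submodule ℝ (Z →L[ℝ] ℝ)}

lemma isClosed_wstarTop_le_apply (z : Z) (c : ℝ) :
    @IsClosed _ (wstarTop Z) {w : Z →L[ℝ] ℝ | c ≤ w z} := by
  let := wstarTop Z
  have hcont : Continuous fun w : Z →L[ℝ] ℝ => w z :=
    (continuous_apply (A := fun _ => ℝ) z).comp continuous_induced_dom
  exact isClosed_Ici.preimage hcont

lemma le_apply_of_mem_closure_convexHull_avgRange {A : Set Ω} {z : Z} {c : ℝ}
    (h : ∀ B ⊆ A, MeasurableSet B → c * μ.real B ≤ ν B z) {x : Z →L[ℝ] ℝ}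
    (hx : x ∈ @closure _ (wstarTop Z) (convexHull ℝ (avgRange μ ν A))) : c ≤ x z := by
  have hconv : Convex ℝ {w : Z →L[ℝ] ℝ | c ≤ w z} :=
    convex_halfSpace_ge (ContinuousLinearMap.apply ℝ ℝ z).isLinear c
  have hsub : avgRange μ ν A ⊆ {w | c ≤ w z} := by
    rintro _ ⟨B, hB, hBA, hμB, rfl⟩
    have hpos : 0 < μ.real B := ENNReal.toReal_pos hμB.ne' (measure_ne_top μ B)
    change c ≤ (μ.real B)⁻¹ * ν B z
    rw [inv_mul_eq_div, le_div_iff₀ hpos]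
    exact h B hBA hB
  exact (@closure_minimal _ (wstarTop Z) _ _ (convexHull_min hsub hconv)
    (isClosed_wstarTop_le_apply z c)) hx

lemma CondG.exists_mem_frequently_le_apply (hG : CondG μ ν X)
    (hν : ν ≪ᵥ μ.toENNRealVectorMeasure) {y : ℕ → Z} {f : Lp ℝ 1 μ}
    (hy : Tendsto (fun n => dualDensity hν (NormedSpace.inclusionInDoubleDual ℝ Z (y n))) atTop
      (𝓝 f)) {A : Set Ω} (hA : MeasurableSet A) (hμA : 0 < μ A) {c d : ℝ} (hcd : c < d)
    (hdf : ∀ x ∈ A, d ≤ f x) : ∃ x ∈ X, ∃ᶠ n in atTop, c ≤ x (y n) := by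
  obtain ⟨B, -, hB, hμB, hfreq⟩ := exists_measurableSet_frequently_forall_le
    (fun n => Lp.stronglyMeasurable _) (Lp.stronglyMeasurable f) (tendstoInMeasure_of_tendsto_Lp hy)
    hA hμA (measure_ne_top μ A) hcd hdf
  obtain ⟨x, hxcl, hxX⟩ := hG B hB hμB
  refine ⟨x, hxX, hfreq.mono fun n hn => ?_⟩
  refine le_apply_of_mem_closure_convexHull_avgRange (fun C hCB hC => ?_) hxcl
  calc c * μ.real C = ∫ _ in C, c ∂μ := by rw [setIntegral_const, smul_eq_mul, mul_comm]
    _ ≤ ∫ t in C, dualDensity hν (NormedSpace.inclusionInDoubleDual ℝ Z (y n)) t ∂μ :=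
      setIntegral_mono_on (integrable_const c) (L1.integrable_coeFn _).integrableOn hC
        fun t ht => hn t (hCB ht)
    _ = ν C (y n) := by
      rw [← setIntegralCLM_apply, setIntegralCLM_dualDensity hν _ hC, NormedSpace.dual_def]

lemma CondG.apply_nonpos_of_mapClusterPt (hG : CondG μ ν X)
    (hν : ν ≪ᵥ μ.toENNRealVectorMeasure) {z : ℕ → Z}
    (hz : ∀ x ∈ X, Tendsto (fun n => x (z n)) atTop (𝓝 0)) {Φ : WeakDual ℝ (Z →L[ℝ] ℝ)}
    (hΦ : MapClusterPt Φ atTop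
      fun n => StrongDual.toWeakDual (NormedSpace.inclusionInDoubleDual ℝ Z (z n)))
    {A : Set Ω} (hA : MeasurableSet A) : Φ (ν A) ≤ 0 := by
  by_contra! hpos
  let f := dualDensity hν (WeakDual.toStrongDual Φ)
  have hfA : ∫ x in A, f x ∂μ = Φ (ν A) := by
    rw [← setIntegralCLM_apply, setIntegralCLM_dualDensity hν _ hA]
    rfl
  have hμA : μ A ≠ 0 := fun h => by
    rw [setIntegral_measure_zero _ h] at hfA
    exact hpos.ne hfA
  have hδ : 0 < ⨍ x in A, f x ∂μ := by
    rw [setAverage_eq, hfA, smul_eq_mul]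
    exact mul_pos (inv_pos.2 (ENNReal.toReal_pos hμA (measure_ne_top μ A))) hpos
  set δ := ⨍ x in A, f x ∂μ
  have hA' : MeasurableSet {x ∈ A | δ ≤ f x} :=
    hA.inter (measurableSet_le measurable_const (Lp.stronglyMeasurable f).measurable)
  have hμA' : 0 < μ {x ∈ A | δ ≤ f x} :=
    measure_setAverage_le_pos hμA (measure_ne_top μ A) (L1.integrable_coeFn f).integrableOn
  let T := (dualDensity hν).comp (NormedSpace.inclusionInDoubleDual ℝ Z)
  have hf := hΦ.tendsto_comp ((continuous_toWeakSpace_dualDensity hν).tendsto Φ)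
  obtain ⟨y, hyz, hyf⟩ :=
    exists_convexHull_tendsto_of_mapClusterPt_toWeakSpace T.toLinearMap hf
  obtain ⟨x, hxX, hfreq⟩ :=
    hG.exists_mem_frequently_le_apply hν hyf hA' hμA' (half_lt_self hδ) fun t ht => ht.2
  have hlt : ∀ᶠ n in atTop, x (y n) < δ / 2 := eventually_apply_lt_of_forall_mem_convexHull
    x.toLinearMap ((hz x hxX).eventually_lt_const (half_pos hδ)) hyz
  obtain ⟨n, hle, hn⟩ := (hfreq.and_eventually hlt).exists
  exact hle.not_gt hn

lemma exists_tendsto_toWeakDual_inclusionInDoubleDual {ι : Type*} {z : ι → Z} {M : ℝ}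
    (hM : ∀ i, ‖z i‖ ≤ M) (U : Ultrafilter ι) : ∃ Φ : WeakDual ℝ (Z →L[ℝ] ℝ),
      Tendsto (fun i => StrongDual.toWeakDual (NormedSpace.inclusionInDoubleDual ℝ Z (z i))) U
        (𝓝 Φ) := by
  let j := fun i => StrongDual.toWeakDual (NormedSpace.inclusionInDoubleDual ℝ Z (z i))
  have hball (i : ι) : j i ∈ WeakDual.toStrongDual ⁻¹' Metric.closedBall 0 M :=
    (mem_closedBall_zero_iff (E := StrongDual ℝ (Z →L[ℝ] ℝ))).2
      ((NormedSpace.double_dual_bound ℝ Z (z i)).trans (hM i))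
  obtain ⟨Φ, -, hΦ⟩ := (WeakDual.isCompact_closedBall 0 M).ultrafilter_le_nhds' (U.map j)
    (Ultrafilter.mem_map.2 (univ_mem' hball))
  exact ⟨Φ, hΦ⟩

lemma CondG.tendsto_apply_zero (hG : CondG μ ν X) (hν : ν ≪ᵥ μ.toENNRealVectorMeasure)
    {z : ℕ → Z} (hz : ∀ x ∈ X, Tendsto (fun n => x (z n)) atTop (𝓝 0)) {M : ℝ}
    (hM : ∀ n, ‖z n‖ ≤ M) {A : Set Ω} (hA : MeasurableSet A) :
    Tendsto (fun n => ν A (z n)) atTop (𝓝 0) := by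
  rw [tendsto_iff_ultrafilter]
  intro U hU
  obtain ⟨Φ, hΦ⟩ := exists_tendsto_toWeakDual_inclusionInDoubleDual hM U
  have hneg : Tendsto (fun n => StrongDual.toWeakDual
      (NormedSpace.inclusionInDoubleDual ℝ Z (-z n))) U (𝓝 (-Φ)) := by
    simpa only [map_neg] using hΦ.neg
  have hle := hG.apply_nonpos_of_mapClusterPt hν hz (hΦ.mapClusterPt.mono hU) hA
  have hge := hG.apply_nonpos_of_mapClusterPt hν (z := fun n => -z n)
    (fun x hx => by simpa only [map_neg, neg_zero] using (hz x hx).neg)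
    (hneg.mapClusterPt.mono hU) hA
  have hzero : Φ (ν A) = 0 := le_antisymm hle (neg_nonpos.1 hge)
  rw [← hzero]
  exact ((WeakDual.eval_continuous (ν A)).tendsto Φ).comp hΦ

end ConditionG

section Norming

lemma banach_steinhaus_of_isClosed_submodule {E F ι : Type*} [NormedAddCommGroup E]
    [NormedSpace ℝ E] [CompleteSpace E] [NormedAddCommGroup F] [NormedSpace ℝ F]
    {X : Submodule ℝ E} (hX : IsClosed (X : Set E)) {ψ : ι → E →L[ℝ] F}
    (h : ∀ x ∈ X, ∃ C, ∀ i, ‖ψ i x‖ ≤ C) : ∃ C, ∀ i, ∀ x ∈ X, ‖ψ i x‖ ≤ C * ‖x‖ := by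
  have : CompleteSpace X := hX.completeSpace_coe
  obtain ⟨C, hC⟩ : ∃ C, ∀ i, ‖(ψ i).comp X.subtypeL‖ ≤ C := banach_steinhaus fun x => h x x.2
  exact ⟨C, fun i x hx => ((ψ i).comp X.subtypeL).le_of_opNorm_le (hC i) ⟨x, hx⟩⟩

variable {Z : Type*} [NormedAddCommGroup Z] [NormedSpace ℝ Z] {X : Submodule ℝ (Z →L[ℝ] ℝ)}

lemma IsNorming.exists_forall_norm_le (hX : IsNorming X)
    (hXclosed : IsClosed (X : Set (Z →L[ℝ] ℝ))) {ι : Type*} {z : ι → Z}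
    (hz : ∀ x ∈ X, ∃ C, ∀ i, ‖x (z i)‖ ≤ C) : ∃ M, ∀ i, ‖z i‖ ≤ M := by
  obtain ⟨C, hC⟩ := banach_steinhaus_of_isClosed_submodule hXclosed
    (ψ := fun i => NormedSpace.inclusionInDoubleDual ℝ Z (z i)) hz
  obtain ⟨c, hc, hnorm⟩ := hX
  refine ⟨|C| / c, fun i => (le_div_iff₀' hc).2 ((hnorm (z i)).trans ?_)⟩
  refine csSup_le ⟨0, 0, X.zero_mem, by simp, by simp⟩ ?_
  rintro _ ⟨x, hx, hx1, rfl⟩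
  calc x (z i) ≤ ‖x (z i)‖ := Real.le_norm_self _
    _ ≤ C * ‖x‖ := hC i x hx
    _ ≤ |C| * ‖x‖ := by gcongr; exact le_abs_self C
    _ ≤ |C| := mul_le_of_le_one_right (abs_nonneg C) hx1

lemma tendsto_apply_sub_of_tendsto_sigmaTop {ι : Type*} {l : Filter ι} {z : ι → Z} {z₀ : Z}
    (hz : Tendsto z l (@nhds _ (sigmaTop X) z₀)) {x : Z →L[ℝ] ℝ} (hx : x ∈ X) :
    Tendsto (fun i => x (z i - z₀)) l (𝓝 0) := by
  rw [sigmaTop, nhds_induced, tendsto_comap_iff, tendsto_pi_nhds] at hz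
  simpa using (hz ⟨x, hx⟩).sub_const (x z₀)

lemma mem_of_continuous_sigmaTop {w : Z →L[ℝ] ℝ} (hw : @Continuous Z ℝ (sigmaTop X) _ w) :
    w ∈ X := by
  have hspan : w.toLinearMap ∈
      Submodule.span ℝ (range fun x : X => (x : Z →L[ℝ] ℝ).toLinearMap) := by
    rw [LinearMap.mem_span_iff_continuous]
    rwa [sigmaTop, induced_to_pi] at hw
  have hrange : range (fun x : X => (x : Z →L[ℝ] ℝ).toLinearMap) =
      X.map (ContinuousLinearMap.coeLM ℝ) := by
    ext u
    simp
  rw [hrange, Submodule.span_eq] at hspan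
  obtain ⟨x, hx, hxw⟩ := hspan
  rwa [← ContinuousLinearMap.coe_injective hxw]

end Norming

theorem range_subset_of_mazur_of_condG_general
    {Ω : Type*} [MeasurableSpace Ω] (μ : Measure Ω) [IsFiniteMeasure μ]
    {Z : Type*} [NormedAddCommGroup Z] [NormedSpace ℝ Z]
    (X : Submodule ℝ (Z →L[ℝ] ℝ)) (hXclosed : IsClosed (X : Set (Z →L[ℝ] ℝ)))
    (hXnorming : IsNorming X)
    (hMazur : ∀ φ : Z →ₗ[ℝ] ℝ,
      (∀ (z : ℕ → Z) (z₀ : Z), Tendsto z atTop (@nhds _ (sigmaTop X) z₀) →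
        Tendsto (fun n => φ (z n)) atTop (nhds (φ z₀))) →
      @Continuous Z ℝ (sigmaTop X) _ φ)
    (ν : VectorMeasure Ω (Z →L[ℝ] ℝ))
    (hν : ∀ A : Set Ω, μ A = 0 → ν A = 0)
    (hG : CondG μ ν X) :
    ∀ A : Set Ω, MeasurableSet A → ν A ∈ X := by
  have hac : ν ≪ᵥ μ.toENNRealVectorMeasure := .mk fun B hB h0 =>
    hν B (by rwa [Measure.toENNRealVectorMeasure_apply_measurable hB] at h0)
  intro A hA
  refine mem_of_continuous_sigmaTop (hMazur (ν A).toLinearMap fun z z₀ hz => ?_)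
  have hnull (x) (hx : x ∈ X) : Tendsto (fun n => x (z n - z₀)) atTop (𝓝 0) :=
    tendsto_apply_sub_of_tendsto_sigmaTop hz hx
  obtain ⟨M, hM⟩ := hXnorming.exists_forall_norm_le hXclosed fun x hx =>
    ((Metric.isBounded_range_of_tendsto _ (hnull x hx)).exists_norm_le).imp fun _ hC n =>
      hC _ (mem_range_self n)
  refine tendsto_sub_nhds_zero_iff.1 ?_
  simpa only [map_sub, ContinuousLinearMap.coe_coe] using hG.tendsto_apply_zero hac hnull hM hA

/-- Theorem A: if `(Z, σ(Z,X))` has the Mazur property and `ν ∈ ca(μ, Z*)` satisfies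
condition (G), then `ν(Σ) ⊆ X`. -/
theorem range_subset_of_mazur_of_condG
    {Ω : Type*} [MeasurableSpace Ω] (μ : Measure Ω) [IsFiniteMeasure μ]
    {Z : Type*} [NormedAddCommGroup Z] [NormedSpace ℝ Z] [CompleteSpace Z]
    (X : Submodule ℝ (Z →L[ℝ] ℝ)) (hXclosed : IsClosed (X : Set (Z →L[ℝ] ℝ)))
    (hXnorming : IsNorming X)
    (hMazur : ∀ φ : Z →ₗ[ℝ] ℝ,
      (∀ (z : ℕ → Z) (z₀ : Z), Tendsto z atTop (@nhds _ (sigmaTop X) z₀) →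
        Tendsto (fun n => φ (z n)) atTop (nhds (φ z₀))) →
      @Continuous Z ℝ (sigmaTop X) _ φ)
    (ν : VectorMeasure Ω (Z →L[ℝ] ℝ))
    (hν : ∀ A : Set Ω, μ A = 0 → ν A = 0)
    (hG : CondG μ ν X) :
    ∀ A : Set Ω, MeasurableSet A → ν A ∈ X :=
  range_subset_of_mazur_of_condG_general μ X hXclosed hXnorming hMazur ν hν hG
end
end

section
/- Let (Ω,Σ,μ) be a finite measure space, Z a real Banach space, and X ⊆ Z* a norm-closed subspace which is norming for Z. Suppose that X has Efremov's property (E). If ν : Σ → Z* is a countably additive μ-continuous vector measure satisfying condition (G), then ν(A) ∈ X for every A ∈ Σ. -/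
open MeasureTheory Filter Set Topology
open scoped UniformConvergence

noncomputable section

/-- Efremov's property (E) for the Banach space `X`: the `w*`-closure of every convex subset
`C` of `B_{X*}` consists of limits of `w*`-convergent sequences contained in `C`. -/
def EfremovE (X : Type*) [NormedAddCommGroup X] [NormedSpace ℝ X] : Prop :=
  ∀ C : Set (X →L[ℝ] ℝ), Convex ℝ C → C ⊆ Metric.closedBall 0 1 →
    ∀ f ∈ @closure _ (wstarTop X) C, ∃ g : ℕ → (X →L[ℝ] ℝ),
      (∀ n, g n ∈ C) ∧ Tendsto g atTop (@nhds _ (wstarTop X) f)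

/-!
Suppose `ν A ∉ X`. Helly's lemma and property (E) give `z n ∈ B_Z` with `z n → 0` pointwise on `X`
and `ν A (z n) ≥ d > 0`. Let `Λ ∈ Z**` be a weak* cluster point of `z`, and let `T : Z → L¹(μ)` send
`z` to the density of `B ↦ ν B z`. The set integrals span a dense subspace of `L¹(μ)*`, so `T** Λ`
is the density `f ∈ L¹(μ)` of `B ↦ Λ (ν B)`. By Mazur's lemma `f` is the norm limit of `T (y n)`
with `y n` in the convex hull of `{z k : k ≥ n}`. As `∫ f` over `A` is positive, some `B` of
positive measure has `T (y n) ≥ e > 0` on `B` for infinitely many `n`, hence `x (y n) ≥ e` for every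
`x` in the weak* closed convex hull of the average range of `B`. Condition (G) puts such an `x`
in `X`, contradicting `x (y n) → 0`.
-/

section WeakStar

variable {E : Type*} [NormedAddCommGroup E] [NormedSpace ℝ E]

lemma tendsto_nhds_wstarTop_iff {ι : Type*} {l : Filter ι} {g : ι → E →L[ℝ] ℝ}
    {f : E →L[ℝ] ℝ} :
    Tendsto g l (@nhds _ (wstarTop E) f) ↔ ∀ x, Tendsto (fun i => g i x) l (𝓝 (f x)) := by
  rw [wstarTop, nhds_induced, tendsto_comap_iff, tendsto_pi_nhds]
  rfl

lemma mem_closure_wstarTop_of_forall_finset {S : Set (E →L[ℝ] ℝ)} {f : E →L[ℝ] ℝ}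
    (h : ∀ F : Finset E, ∃ g ∈ S, ∀ x ∈ F, g x = f x) : f ∈ @closure _ (wstarTop E) S := by
  rw [wstarTop, closure_induced, mem_closure_iff]
  intro U hU hfU
  obtain ⟨F, V, hV, hVU⟩ := isOpen_pi_iff.1 hU _ hfU
  obtain ⟨g, hgS, hgf⟩ := h F
  refine ⟨g, hVU fun x hx => ?_, g, hgS, rfl⟩
  simpa only [hgf x hx] using (hV x hx).2

lemma le_apply_of_mem_closure_wstarTop {S : Set (E →L[ℝ] ℝ)} {x : E} {c : ℝ}
    (hS : ∀ g ∈ S, c ≤ g x) {f : E →L[ℝ] ℝ} (hf : f ∈ @closure _ (wstarTop E) S) :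
    c ≤ f x := by
  rw [wstarTop, closure_induced] at hf
  have hclosed : IsClosed {u : E → ℝ | c ≤ u x} :=
    isClosed_le continuous_const (continuous_apply x)
  refine closure_minimal ?_ hclosed hf
  rintro _ ⟨g, hg, rfl⟩
  exact hS g hg

lemma le_apply_of_mem_convexHull {S : Set (E →L[ℝ] ℝ)} {x : E} {c : ℝ} (hS : ∀ f ∈ S, c ≤ f x)
    {f : E →L[ℝ] ℝ} (hf : f ∈ convexHull ℝ S) : c ≤ f x :=
  convexHull_min (fun f hf => hS f hf : S ⊆ {f | c ≤ f x})
    ((convex_Ici c).linear_preimage (ContinuousLinearMap.apply ℝ ℝ x).toLinearMap) hf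

end WeakStar

section Annihilator

variable {Z : Type*} [NormedAddCommGroup Z] [NormedSpace ℝ Z]

lemma mem_span_of_forall_apply_eq_zero {ι : Type*} [Finite ι] {x : ι → Z →L[ℝ] ℝ}
    {w : Z →L[ℝ] ℝ} (h : ∀ z, (∀ i, x i z = 0) → w z = 0) :
    w ∈ Submodule.span ℝ (range x) := by
  have hspan : (w : Z →ₗ[ℝ] ℝ) ∈
      Submodule.span ℝ (range fun i => (x i : Z →ₗ[ℝ] ℝ)) :=
    mem_span_of_iInf_ker_le_ker fun z hz => h z fun i => (Submodule.mem_iInf _).1 hz i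
  have hrange : (range fun i => (x i : Z →ₗ[ℝ] ℝ)) =
      ContinuousLinearMap.coeLM ℝ '' range x := (range_comp _ x).symm ▸ rfl
  rw [hrange, Submodule.span_image] at hspan
  obtain ⟨v, hv, hvw⟩ := hspan
  rwa [← ContinuousLinearMap.coe_injective hvw]

-- Helly: otherwise `w` has norm at most `d` on the common kernel of the `x i`, and subtracting
-- a norm-preserving extension of that restriction moves `w` into their span.
lemma exists_norm_le_one_of_lt_infDist {X : Submodule ℝ (Z →L[ℝ] ℝ)} {w : Z →L[ℝ] ℝ}
    {d : ℝ} (hd₀ : 0 ≤ d) (hd : d < Metric.infDist w X) {ι : Type*} [Finite ι]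
    {x : ι → Z →L[ℝ] ℝ} (hx : ∀ i, x i ∈ X) :
    ∃ z : Z, ‖z‖ ≤ 1 ∧ (∀ i, x i z = 0) ∧ d ≤ w z := by
  by_contra! hlt
  let K : Submodule ℝ Z := ⨅ i, (x i).ker
  have mem_K {z : Z} : z ∈ K ↔ ∀ i, x i z = 0 := by
    simp only [K, Submodule.mem_iInf, LinearMap.mem_ker, ContinuousLinearMap.coe_coe]
  have hw_lt {z : Z} (hz : z ∈ K) (hz1 : ‖z‖ ≤ 1) : w z < d := hlt z hz1 (mem_K.1 hz)
  have hnorm : ‖w.comp K.subtypeL‖ ≤ d := by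
    refine ContinuousLinearMap.opNorm_le_of_unit_norm hd₀ fun z hz => ?_
    have hneg := hw_lt (K.neg_mem z.2) ((norm_neg _).trans_le hz.le)
    rw [map_neg] at hneg
    exact abs_le.2 ⟨(neg_lt.1 hneg).le, (hw_lt z.2 hz.le).le⟩
  obtain ⟨g, hgw, hg⟩ := exists_extension_norm_eq K (w.comp K.subtypeL)
  have hmem : w - g ∈ X := by
    refine Submodule.span_le.2 (range_subset_iff.2 hx)
      (mem_span_of_forall_apply_eq_zero (w := w - g) fun z hz => ?_)
    exact sub_eq_zero.2 (hgw ⟨z, mem_K.2 hz⟩).symm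
  refine hd.not_ge ((Metric.infDist_le_dist_of_mem hmem).trans ?_)
  rw [dist_eq_norm, sub_sub_cancel, hg]
  exact hnorm

lemma exists_seq_tendsto_zero_of_efremov {Y : Type*} [NormedAddCommGroup Y] [NormedSpace ℝ Y]
    (hE : EfremovE Y) (i : Y →ₗᵢ[ℝ] Z →L[ℝ] ℝ) (hi : IsClosed (range i)) {w : Z →L[ℝ] ℝ}
    (hw : w ∉ range i) :
    ∃ d > 0, ∃ z : ℕ → Z, (∀ n, ‖z n‖ ≤ 1) ∧ (∀ n, d ≤ w (z n)) ∧
      ∀ y, Tendsto (fun n => i y (z n)) atTop (𝓝 0) := by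
  obtain ⟨d, hd₀, hd⟩ := exists_between
    ((hi.notMem_iff_infDist_pos (range_nonempty i)).1 hw)
  let J : Z →L[ℝ] Y →L[ℝ] ℝ := i.toContinuousLinearMap.flip
  let S : Set Z := Metric.closedBall 0 1 ∩ {z | d ≤ w z}
  have hconvex : Convex ℝ (J '' S) :=
    ((convex_closedBall 0 1).inter
      ((convex_Ici d).linear_preimage w.toLinearMap)).linear_image J.toLinearMap
  have hball : J '' S ⊆ Metric.closedBall 0 1 := by
    rintro _ ⟨z, ⟨hz, -⟩, rfl⟩
    rw [mem_closedBall_zero_iff] at hz ⊢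
    calc ‖J z‖ ≤ ‖J‖ * ‖z‖ := J.le_opNorm z
      _ ≤ 1 * 1 := by
        gcongr
        exact i.toContinuousLinearMap.opNorm_flip.trans_le i.norm_toContinuousLinearMap_le
      _ = 1 := one_mul 1
  have hzero : 0 ∈ @closure _ (wstarTop Y) (J '' S) :=
    mem_closure_wstarTop_of_forall_finset fun F => by
      obtain ⟨z, hz1, hzF, hwz⟩ := exists_norm_le_one_of_lt_infDist
        (X := i.toLinearMap.range) hd₀.le hd (x := fun y : F => i y) fun y => ⟨y, rfl⟩
      exact ⟨J z, ⟨z, ⟨mem_closedBall_zero_iff.2 hz1, hwz⟩, rfl⟩, fun y hy => hzF ⟨y, hy⟩⟩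
  obtain ⟨g, hgS, hg⟩ := hE _ hconvex hball 0 hzero
  choose z hzS hzg using hgS
  refine ⟨d, hd₀, z, fun n => mem_closedBall_zero_iff.1 (hzS n).1, fun n => (hzS n).2,
    fun y => (tendsto_nhds_wstarTop_iff.1 hg y).congr fun n => ?_⟩
  rw [← hzg n]
  rfl

end Annihilator

section ConvexTails

lemma tendsto_of_mem_convexHull_tails {E : Type*} [AddCommGroup E] [Module ℝ E]
    [TopologicalSpace E] [LocallyConvexSpace ℝ E] {u v : ℕ → E} {a : E}
    (hu : Tendsto u atTop (𝓝 a)) (hv : ∀ n, v n ∈ convexHull ℝ (u '' Ici n)) :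
    Tendsto v atTop (𝓝 a) := by
  refine (LocallyConvexSpace.convex_basis (𝕜 := ℝ) a).tendsto_right_iff.2 fun V ⟨hV, hVc⟩ => ?_
  obtain ⟨N, hN⟩ := eventually_atTop.1 (hu.eventually hV)
  filter_upwards [eventually_ge_atTop N] with n hn
  exact convexHull_min (image_subset_iff.2 fun k hk => hN k (hn.trans hk)) hVc (hv n)

variable {Z : Type*} [NormedAddCommGroup Z] [NormedSpace ℝ Z]

lemma exists_bidual_mapClusterPt_of_norm_le {z : ℕ → Z} {r : ℝ} (hz : ∀ n, ‖z n‖ ≤ r) :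
    ∃ Λ : (Z →L[ℝ] ℝ) →L[ℝ] ℝ,
      ∀ w : Z →L[ℝ] ℝ, MapClusterPt (Λ w) atTop fun n => w (z n) := by
  let J : ℕ → WeakDual ℝ (Z →L[ℝ] ℝ) := fun n =>
    (WeakDual.toStrongDual).symm (NormedSpace.inclusionInDoubleDual ℝ Z (z n))
  have hJ (n : ℕ) : J n ∈ WeakDual.toStrongDual ⁻¹' Metric.closedBall 0 r :=
    (mem_closedBall_zero_iff (E := StrongDual ℝ (Z →L[ℝ] ℝ))).2
      ((NormedSpace.double_dual_bound ℝ Z (z n)).trans (hz n))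
  obtain ⟨Λ, -, hΛ⟩ := (WeakDual.isCompact_closedBall (𝕜 := ℝ) (E := Z →L[ℝ] ℝ)
    0 r).exists_mapClusterPt (f := atTop) (u := J)
    (tendsto_principal.2 (Eventually.of_forall hJ))
  exact ⟨WeakDual.toStrongDual Λ, fun w =>
    hΛ.continuousAt_comp (WeakDual.eval_continuous w).continuousAt⟩

variable {E : Type*} [NormedAddCommGroup E] [NormedSpace ℝ E]

lemma mem_closure_convexHull_tail_of_bidual {z : ℕ → Z} {Λ : (Z →L[ℝ] ℝ) →L[ℝ] ℝ}
    (hΛ : ∀ w : Z →L[ℝ] ℝ, MapClusterPt (Λ w) atTop fun n => w (z n)) {T : Z →L[ℝ] E} {f : E}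
    (hf : ∀ φ : E →L[ℝ] ℝ, Λ (φ.comp T) = φ f) (n : ℕ) :
    f ∈ closure (T '' convexHull ℝ (z '' Ici n)) := by
  by_contra hfn
  have hconvex : Convex ℝ (T '' convexHull ℝ (z '' Ici n)) :=
    (convex_convexHull ℝ _).linear_image T.toLinearMap
  obtain ⟨φ, c, hφ, hc⟩ :=
    geometric_hahn_banach_closed_point hconvex.closure isClosed_closure hfn
  have hev : ∀ᶠ k in atTop, φ (T (z k)) ∈ Iic c := by
    filter_upwards [eventually_ge_atTop n] with k hk
    exact (hφ _ (subset_closure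
      (mem_image_of_mem T (subset_convexHull ℝ _ (mem_image_of_mem z hk))))).le
  have hle : Λ (φ.comp T) ≤ c := isClosed_Iic.mem_of_mapClusterPt (hΛ (φ.comp T)) hev
  exact hc.not_ge (hf φ ▸ hle)

lemma exists_seq_mem_convexHull_tails_tendsto {z : ℕ → Z} {Λ : (Z →L[ℝ] ℝ) →L[ℝ] ℝ}
    (hΛ : ∀ w : Z →L[ℝ] ℝ, MapClusterPt (Λ w) atTop fun n => w (z n)) {T : Z →L[ℝ] E} {f : E}
    (hf : ∀ φ : E →L[ℝ] ℝ, Λ (φ.comp T) = φ f) :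
    ∃ y : ℕ → Z, (∀ n, y n ∈ convexHull ℝ (z '' Ici n)) ∧
      Tendsto (fun n => T (y n)) atTop (𝓝 f) := by
  have hnear (n : ℕ) : ∃ y ∈ convexHull ℝ (z '' Ici n), dist f (T y) < 1 / ((n : ℝ) + 1) :=
    exists_mem_image.1 (Metric.mem_closure_iff.1 (mem_closure_convexHull_tail_of_bidual hΛ hf n)
      _ Nat.one_div_pos_of_nat)
  choose y hy hdist using hnear
  refine ⟨y, hy, tendsto_iff_dist_tendsto_zero.2 (squeeze_zero (fun _ => dist_nonneg)
    (fun n => ?_) tendsto_one_div_add_atTop_nhds_zero_nat)⟩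
  rw [dist_comm]
  exact (hdist n).le

end ConvexTails

section L1Dual

open scoped ENNReal

variable {Ω : Type*} [MeasurableSpace Ω] {μ : Measure Ω}

lemma exists_simpleFunc_abs_sub_le {g : Ω → ℝ} (hg : Measurable g) {C : ℝ}
    (hC : ∀ ω, |g ω| ≤ C) {ε : ℝ} (hε : 0 < ε) :
    ∃ s : SimpleFunc Ω ℝ, ∀ ω, |g ω - s ω| ≤ ε := by
  have hrange : (range fun ω => ⌊g ω / ε⌋).Finite := by
    refine (finite_Icc ⌊-C / ε⌋ ⌊C / ε⌋).subset (range_subset_iff.2 fun ω => ?_)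
    have hω := abs_le.1 (hC ω)
    constructor <;> gcongr
    exacts [hω.1, hω.2]
  let q : SimpleFunc Ω ℤ := ⟨fun ω => ⌊g ω / ε⌋,
    fun k => (hg.div_const ε).floor (measurableSet_singleton k), hrange⟩
  refine ⟨q.map fun k : ℤ => ε * k, fun ω => ?_⟩
  have hfract : g ω - ε * ⌊g ω / ε⌋ = ε * Int.fract (g ω / ε) := by
    rw [Int.fract, mul_sub, mul_div_cancel₀ _ hε.ne']
  change |g ω - ε * (⌊g ω / ε⌋ : ℝ)| ≤ ε
  rw [hfract, abs_of_nonneg (mul_nonneg hε.le (Int.fract_nonneg _))]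
  exact mul_le_of_le_one_right hε.le (Int.fract_lt_one _).le

lemma exists_simpleFunc_ae_abs_sub_le (g : Lp ℝ ∞ μ) {ε : ℝ} (hε : 0 < ε) :
    ∃ s : SimpleFunc Ω ℝ, ∀ᵐ ω ∂μ, |g ω - s ω| ≤ ε := by
  have hg : Measurable g := (Lp.stronglyMeasurable g).measurable
  have hbound : ∀ᵐ ω ∂μ, |g ω| ≤ ‖g‖ := by
    filter_upwards [ae_le_eLpNormEssSup (f := g) (μ := μ)] with ω hω
    rw [← eLpNorm_exponent_top, ← Lp.enorm_def] at hω
    exact enorm_le_iff_norm_le.1 hω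
  obtain ⟨s, hs⟩ := exists_simpleFunc_abs_sub_le (g := fun ω => max (-‖g‖) (min (g ω) ‖g‖))
    (C := ‖g‖) (by fun_prop)
    (fun ω => abs_le.2 ⟨le_max_left _ _, max_le (by linarith [norm_nonneg g]) (min_le_right _ _)⟩)
    hε
  refine ⟨s, hbound.mono fun ω hω => ?_⟩
  simpa only [min_eq_left (abs_le.1 hω).2, max_eq_right (abs_le.1 hω).1] using hs ω

/-- The pairing `g ↦ (u ↦ ∫ g u ∂μ)` of `L^∞(μ)` with `L¹(μ)`. -/
def integralMulCLM (μ : Measure Ω) : Lp ℝ ∞ μ →L[ℝ] (Ω →₁[μ] ℝ) →L[ℝ] ℝ :=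
  (ContinuousLinearMap.mul ℝ ℝ).lpPairing μ ∞ 1

lemma integralMulCLM_apply (g : Lp ℝ ∞ μ) (u : Ω →₁[μ] ℝ) :
    integralMulCLM μ g u = ∫ ω, g ω * u ω ∂μ :=
  (ContinuousLinearMap.mul ℝ ℝ).lpPairing_eq_integral g u

lemma smul_indicatorConstLp_one {p : ℝ≥0∞} (c : ℝ) {A : Set Ω} (hA : MeasurableSet A)
    (hμA : μ A ≠ ∞) : c • indicatorConstLp p hA hμA (1 : ℝ) = indicatorConstLp p hA hμA c := by
  rw [indicatorConstLp, ← MemLp.toLp_const_smul, indicatorConstLp]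
  refine MemLp.toLp_congr _ _ (ae_of_all μ fun ω => ?_)
  by_cases h : ω ∈ A <;> simp [h]

variable [IsFiniteMeasure μ]

lemma simpleFunc_toLp_mem_span_indicatorConstLp (s : SimpleFunc Ω ℝ) :
    (s.memLp_top μ).toLp s ∈ Submodule.span ℝ
      (range fun A : {A : Set Ω // MeasurableSet A} =>
        indicatorConstLp ∞ A.2 (measure_ne_top μ A) (1 : ℝ)) := by
  induction s using SimpleFunc.induction with
  | @const c A hA =>
    have hsmul : ((SimpleFunc.piecewise A hA (SimpleFunc.const Ω c)
        (SimpleFunc.const Ω 0)).memLp_top μ).toLp _ =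
          c • indicatorConstLp ∞ hA (measure_ne_top μ A) (1 : ℝ) := by
      rw [smul_indicatorConstLp_one]
      refine MemLp.toLp_congr _ _ (ae_of_all μ fun ω => ?_)
      by_cases h : ω ∈ A <;> simp [h]
    rw [hsmul]
    exact Submodule.smul_mem _ c (Submodule.subset_span ⟨⟨A, hA⟩, rfl⟩)
  | @add s t _ hs ht =>
    exact Submodule.add_mem _ hs ht

lemma dense_span_indicatorConstLp_top :
    Dense (Submodule.span ℝ (range fun A : {A : Set Ω // MeasurableSet A} =>
      indicatorConstLp ∞ A.2 (measure_ne_top μ A) (1 : ℝ)) : Set (Lp ℝ ∞ μ)) := by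
  refine Metric.dense_iff.2 fun g ε hε => ?_
  obtain ⟨s, hs⟩ := exists_simpleFunc_ae_abs_sub_le g (half_pos hε)
  refine ⟨(s.memLp_top μ).toLp s, ?_, simpleFunc_toLp_mem_span_indicatorConstLp s⟩
  have hae : ∀ᵐ ω ∂μ, ‖((s.memLp_top μ).toLp s - g : Lp ℝ ∞ μ) ω‖ ≤ ε / 2 := by
    filter_upwards [hs, Lp.coeFn_sub ((s.memLp_top μ).toLp s) g, (s.memLp_top μ).coeFn_toLp]
      with ω hω hsub hcoe
    rwa [hsub, Pi.sub_apply, hcoe, norm_sub_rev]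
  rw [Metric.mem_ball, dist_eq_norm]
  refine lt_of_le_of_lt ?_ (half_lt_self hε)
  simpa using Lp.norm_le_of_ae_bound (half_pos hε).le hae

lemma integralMulCLM_indicatorConstLp {A : Set Ω} (hA : MeasurableSet A) (u : Ω →₁[μ] ℝ) :
    integralMulCLM μ (indicatorConstLp ∞ hA (measure_ne_top μ A) 1) u = ∫ ω in A, u ω ∂μ := by
  rw [integralMulCLM_apply, ← integral_indicator hA]
  refine integral_congr_ae ?_
  filter_upwards [indicatorConstLp_coeFn (p := ∞) (hs := hA) (hμs := measure_ne_top μ A)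
    (c := (1 : ℝ))] with ω hω
  by_cases h : ω ∈ A <;> simp [hω, h]

lemma exists_L2_setIntegral_eq (φ : (Ω →₁[μ] ℝ) →L[ℝ] ℝ) :
    ∃ g : Lp ℝ 2 μ, ∀ (A : Set Ω) (hA : MeasurableSet A),
      ∫ ω in A, g ω ∂μ = φ (indicatorConstLp 1 hA (measure_ne_top μ A) 1) := by
  let ι : Lp ℝ 2 μ →L[ℝ] Ω →₁[μ] ℝ :=
    ((ContinuousLinearMap.mul ℝ ℝ).holderL μ 2 2 1).flip (Lp.const 2 μ 1)
  have hι (v : Lp ℝ 2 μ) : ι v =ᵐ[μ] v := by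
    filter_upwards [(ContinuousLinearMap.mul ℝ ℝ).coeFn_holder (r := 1) v (Lp.const 2 μ 1),
      Lp.coeFn_const (p := 2) (μ := μ) (1 : ℝ)] with ω hω hone
    exact hω.trans (by rw [hone]; exact mul_one _)
  refine ⟨(InnerProductSpace.toDual ℝ _).symm (φ.comp ι), fun A hA => ?_⟩
  rw [← L2.inner_indicatorConstLp_one hA (measure_ne_top μ A), real_inner_comm,
    InnerProductSpace.toDual_symm_apply, ContinuousLinearMap.comp_apply]
  congr 1
  exact Lp.ext ((hι _).trans (indicatorConstLp_coeFn.trans indicatorConstLp_coeFn.symm))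

lemma ae_abs_le_of_abs_setIntegral_le {g : Ω → ℝ} (hg : Integrable g μ) {C : ℝ}
    (h : ∀ A, MeasurableSet A → |∫ ω in A, g ω ∂μ| ≤ C * μ.real A) : ∀ᵐ ω ∂μ, |g ω| ≤ C := by
  have hconst (A : Set Ω) (c : ℝ) : ∫ _ in A, c ∂μ = c * μ.real A := by
    rw [setIntegral_const, smul_eq_mul, mul_comm]
  have hupper : g ≤ᵐ[μ] fun _ => C :=
    ae_le_of_forall_setIntegral_le hg (integrable_const C) fun A hA _ => by
      rw [hconst]
      exact (abs_le.1 (h A hA)).2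
  have hlower : (fun _ => -C) ≤ᵐ[μ] g :=
    ae_le_of_forall_setIntegral_le (integrable_const _) hg fun A hA _ => by
      rw [hconst, neg_mul]
      exact (abs_le.1 (h A hA)).1
  filter_upwards [hlower, hupper] with ω hl hu using abs_le.2 ⟨hl, hu⟩

lemma Lp_clm_ext_indicatorConstLp {p : ℝ≥0∞} [Fact (1 ≤ p)] (hp : p ≠ ∞) {F : Type*}
    [NormedAddCommGroup F] [NormedSpace ℝ F] {φ ψ : Lp ℝ p μ →L[ℝ] F}
    (h : ∀ (A : Set Ω) (hA : MeasurableSet A),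
      φ (indicatorConstLp p hA (measure_ne_top μ A) 1) =
        ψ (indicatorConstLp p hA (measure_ne_top μ A) 1)) : φ = ψ := by
  ext u
  induction u using Lp.induction (p := p) hp with
  | @indicatorConst c A hA _ =>
    rw [Lp.simpleFunc.coe_indicatorConst, ← smul_indicatorConstLp_one, map_smul, map_smul, h]
  | @add u v hu hv _ hφu hφv => rw [map_add, map_add, hφu, hφv]
  | isClosed => exact isClosed_eq φ.continuous ψ.continuous

lemma integralMulCLM_surjective : Function.Surjective (integralMulCLM μ) := by
  intro φ
  obtain ⟨g, hg⟩ := exists_L2_setIntegral_eq φ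
  have hbound : ∀ᵐ ω ∂μ, |g ω| ≤ ‖φ‖ := by
    refine ae_abs_le_of_abs_setIntegral_le
      ((Lp.memLp g).integrable one_le_two) fun A hA => ?_
    rw [hg A hA]
    refine (φ.le_opNorm _).trans_eq ?_
    rw [norm_indicatorConstLp one_ne_zero ENNReal.one_ne_top]
    simp
  let g' : Lp ℝ ∞ μ := (memLp_top_of_bound (Lp.aestronglyMeasurable g) ‖φ‖ hbound).toLp g
  refine ⟨g', Lp_clm_ext_indicatorConstLp ENNReal.one_ne_top fun A hA => ?_⟩
  rw [integralMulCLM_apply, ← hg A hA, ← integral_indicator hA]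
  refine integral_congr_ae ?_
  filter_upwards [MemLp.coeFn_toLp (memLp_top_of_bound (Lp.aestronglyMeasurable g) ‖φ‖ hbound),
    indicatorConstLp_coeFn (p := 1) (hs := hA) (hμs := measure_ne_top μ A) (c := (1 : ℝ))]
    with ω hg' hω
  by_cases h : ω ∈ A <;> simp [g', hg', hω, h]

lemma L1_bidual_apply_eq {G : ((Ω →₁[μ] ℝ) →L[ℝ] ℝ) →L[ℝ] ℝ} {f : Ω →₁[μ] ℝ}
    (h : ∀ (A : Set Ω) (hA : MeasurableSet A),
      G (integralMulCLM μ (indicatorConstLp ∞ hA (measure_ne_top μ A) 1)) = ∫ ω in A, f ω ∂μ)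
    (φ : (Ω →₁[μ] ℝ) →L[ℝ] ℝ) : G φ = φ f := by
  have hcomp : G.comp (integralMulCLM μ) = (integralMulCLM μ).flip f := by
    refine ContinuousLinearMap.ext_on dense_span_indicatorConstLp_top ?_
    rintro _ ⟨⟨A, hA⟩, rfl⟩
    exact (h A hA).trans (integralMulCLM_indicatorConstLp hA f).symm
  obtain ⟨g, rfl⟩ := integralMulCLM_surjective φ
  exact DFunLike.congr_fun hcomp g

end L1Dual

section DensityOperator

variable {Ω : Type*} [MeasurableSpace Ω] {μ : Measure Ω}

lemma L1_eq_of_setIntegral_eq {u v : Ω →₁[μ] ℝ}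
    (h : ∀ A, MeasurableSet A → ∫ ω in A, u ω ∂μ = ∫ ω in A, v ω ∂μ) : u = v :=
  Lp.ext (Integrable.ae_eq_of_forall_setIntegral_eq _ _ (L1.integrable_coeFn u)
    (L1.integrable_coeFn v) fun A hA _ => h A hA)

lemma L1_norm_le_of_abs_setIntegral_le {u : Ω →₁[μ] ℝ} {c : ℝ}
    (h : ∀ A, MeasurableSet A → |∫ ω in A, u ω ∂μ| ≤ c) : ‖u‖ ≤ 2 * c := by
  have hu : Measurable u := (Lp.stronglyMeasurable u).measurable
  have hpos := (abs_le.1 (h {ω | 0 ≤ u ω} (measurableSet_le measurable_const hu))).2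
  have hneg := (abs_le.1 (h {ω | u ω ≤ 0} (measurableSet_le hu measurable_const))).1
  rw [L1.norm_eq_integral_norm, integral_norm_eq_pos_sub_neg (L1.integrable_coeFn u)]
  linarith

lemma exists_L1_setIntegral_eq [SigmaFinite μ] {E : Type*} [NormedAddCommGroup E]
    [NormedSpace ℝ E] {ν : VectorMeasure Ω E} (hν : ∀ A, μ A = 0 → ν A = 0) (L : E →L[ℝ] ℝ) :
    ∃ f : Ω →₁[μ] ℝ, ∀ A, MeasurableSet A → ∫ ω in A, f ω ∂μ = L (ν A) := by
  let s : SignedMeasure Ω := ν.mapRange L.toLinearMap.toAddMonoidHom L.continuous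
  have hs : s ≪ᵥ μ.toENNRealVectorMeasure := by
    refine VectorMeasure.AbsolutelyContinuous.mk fun A hA hμA => ?_
    rw [Measure.toENNRealVectorMeasure_apply_measurable hA] at hμA
    change L (ν A) = 0
    rw [hν A hμA, map_zero]
  have hint : Integrable (s.rnDeriv μ) μ := SignedMeasure.integrable_rnDeriv s μ
  refine ⟨hint.toL1 _, fun A hA => ?_⟩
  rw [integral_congr_ae (ae_restrict_of_ae hint.coeFn_toL1), ← withDensityᵥ_apply hint hA,
    SignedMeasure.withDensityᵥ_rnDeriv_eq s μ hs]
  rfl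

variable {Z : Type*} [NormedAddCommGroup Z] [NormedSpace ℝ Z]
  {ν : VectorMeasure Ω (Z →L[ℝ] ℝ)}

lemma exists_clm_setIntegral_eq_apply [SigmaFinite μ] (hν : ∀ A, μ A = 0 → ν A = 0) :
    ∃ T : Z →L[ℝ] Ω →₁[μ] ℝ, ∀ z A, MeasurableSet A → ∫ ω in A, T z ω ∂μ = ν A z := by
  choose T hT using fun z => exists_L1_setIntegral_eq hν (ContinuousLinearMap.apply ℝ ℝ z)
  simp only [ContinuousLinearMap.apply_apply] at hT
  have hadd (y z : Z) : T (y + z) = T y + T z := L1_eq_of_setIntegral_eq fun A hA => by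
    rw [integral_congr_ae (ae_restrict_of_ae (Lp.coeFn_add (T y) (T z))),
      integral_add' (L1.integrable_coeFn _).integrableOn (L1.integrable_coeFn _).integrableOn,
      hT _ A hA, hT _ A hA, hT _ A hA, map_add]
  have hsmul (c : ℝ) (z : Z) : T (c • z) = c • T z := L1_eq_of_setIntegral_eq fun A hA => by
    rw [integral_congr_ae (ae_restrict_of_ae (Lp.coeFn_smul c (T z)))]
    simp only [Pi.smul_apply, integral_smul, hT _ A hA, map_smul]
  have hbound (z : Z) : ‖T z‖ ≤ 2 * ν.bound * ‖z‖ := by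
    rw [mul_assoc]
    refine L1_norm_le_of_abs_setIntegral_le fun A hA => ?_
    rw [hT z A hA]
    exact (ν A).le_of_opNorm_le ν.norm_apply_le_bound z
  exact ⟨LinearMap.mkContinuous ⟨⟨T, hadd⟩, hsmul⟩ _ hbound, hT⟩

lemma le_apply_of_mem_avgRange [IsFiniteMeasure μ] {B : Set Ω} {u : Ω → ℝ} (hu : Integrable u μ)
    {y : Z} (hy : ∀ A, MeasurableSet A → ∫ ω in A, u ω ∂μ = ν A y) {e : ℝ}
    (hB : ∀ ω ∈ B, e ≤ u ω) {w : Z →L[ℝ] ℝ} (hw : w ∈ avgRange μ ν B) : e ≤ w y := by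
  obtain ⟨A, hA, hAB, hμA, rfl⟩ := hw
  have hreal : 0 < μ.real A := ENNReal.toReal_pos hμA.ne' (measure_ne_top μ A)
  change e ≤ (μ.real A)⁻¹ * ν A y
  rw [le_inv_mul_iff₀ hreal]
  calc μ.real A * e = ∫ _ in A, e ∂μ := by rw [setIntegral_const, smul_eq_mul]
    _ ≤ ∫ ω in A, u ω ∂μ := setIntegral_mono_on (integrable_const e) hu.integrableOn hA
        fun ω hω => hB ω (hAB hω)
    _ = ν A y := hy A hA

lemma exists_measurableSet_frequently_le_of_tendsto {u : ℕ → Ω →₁[μ] ℝ} {f : Ω →₁[μ] ℝ}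
    (hu : Tendsto u atTop (𝓝 f)) (hf : ¬ f ≤ᵐ[μ] 0) :
    ∃ B, MeasurableSet B ∧ 0 < μ B ∧ ∃ e > 0, ∃ᶠ n in atTop, ∀ ω ∈ B, e ≤ u n ω := by
  obtain ⟨φ, hφ, hlim⟩ := (tendstoInMeasure_of_tendsto_Lp hu).exists_seq_tendsto_ae
  let B (k : ℕ) : Set Ω := {ω | ∀ j ≥ k, 1 / ((k : ℝ) + 1) ≤ u (φ j) ω}
  have hBmeas (k : ℕ) : MeasurableSet (B k) := by
    simp only [B, ofPred_forall]
    exact MeasurableSet.iInter fun j => MeasurableSet.iInter fun _ =>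
      measurableSet_le measurable_const (Lp.stronglyMeasurable _).measurable
  have hcover : ∀ᵐ ω ∂μ, 0 < f ω → ω ∈ ⋃ k, B k := by
    filter_upwards [hlim] with ω hω hpos
    have hev : ∀ᶠ k : ℕ in atTop, 1 / ((k : ℝ) + 1) < f ω / 2 :=
      tendsto_one_div_add_atTop_nhds_zero_nat.eventually_lt_const (half_pos hpos)
    have hlarge : ∀ᶠ k in atTop, ∀ j ≥ k, f ω / 2 < u (φ j) ω :=
      eventually_forall_ge_atTop.2 (hω.eventually_const_lt (half_lt_self hpos))
    obtain ⟨k, hk, hj⟩ := (hev.and hlarge).exists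
    exact mem_iUnion.2 ⟨k, fun j hkj => (hk.trans (hj j hkj)).le⟩
  obtain ⟨k, hk⟩ : ∃ k, μ (B k) ≠ 0 := by
    by_contra! hnull
    refine hf ?_
    filter_upwards [hcover, measure_eq_zero_iff_ae_notMem.1 (measure_iUnion_null hnull)]
      with ω hω hnot
    exact not_lt.1 fun hpos => hnot (hω hpos)
  refine ⟨B k, hBmeas k, pos_iff_ne_zero.2 hk, 1 / ((k : ℝ) + 1), Nat.one_div_pos_of_nat,
    hφ.tendsto_atTop.frequently ?_⟩
  exact ((eventually_ge_atTop k).mono fun j hkj ω hω => hω j hkj).frequently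

lemma le_apply_of_mem_closure_convexHull_avgRange_s1 [IsFiniteMeasure μ] {B : Set Ω} {u : Ω → ℝ}
    (hu : Integrable u μ) {y : Z} (hy : ∀ A, MeasurableSet A → ∫ ω in A, u ω ∂μ = ν A y) {e : ℝ}
    (hB : ∀ ω ∈ B, e ≤ u ω) {w : Z →L[ℝ] ℝ}
    (hw : w ∈ @closure _ (wstarTop Z) (convexHull ℝ (avgRange μ ν B))) : e ≤ w y :=
  le_apply_of_mem_closure_wstarTop (fun _ => le_apply_of_mem_convexHull fun _ =>
    le_apply_of_mem_avgRange hu hy hB) hw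

lemma bidual_comp_eq_apply_of_setIntegral_eq [IsFiniteMeasure μ] {T : Z →L[ℝ] Ω →₁[μ] ℝ}
    (hT : ∀ z A, MeasurableSet A → ∫ ω in A, T z ω ∂μ = ν A z) {Λ : (Z →L[ℝ] ℝ) →L[ℝ] ℝ}
    {f : Ω →₁[μ] ℝ} (hf : ∀ A, MeasurableSet A → ∫ ω in A, f ω ∂μ = Λ (ν A))
    (φ : (Ω →₁[μ] ℝ) →L[ℝ] ℝ) : Λ (φ.comp T) = φ f := by
  let G : ((Ω →₁[μ] ℝ) →L[ℝ] ℝ) →L[ℝ] ℝ :=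
    Λ.comp ((ContinuousLinearMap.compL ℝ Z (Ω →₁[μ] ℝ) ℝ).flip T)
  refine L1_bidual_apply_eq (G := G) (fun A hA => ?_) φ
  have hcomp : (integralMulCLM μ (indicatorConstLp _ hA (measure_ne_top μ A) 1)).comp T = ν A := by
    ext z
    exact (integralMulCLM_indicatorConstLp hA (T z)).trans (hT z A hA)
  exact (congrArg Λ hcomp).trans (hf A hA).symm

lemma exists_seq_mem_convexHull_tails_frequently_le [IsFiniteMeasure μ]
    (hν : ∀ A, μ A = 0 → ν A = 0) {z : ℕ → Z} {r : ℝ} (hz : ∀ n, ‖z n‖ ≤ r) {A : Set Ω}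
    (hA : MeasurableSet A) {d : ℝ} (hd : 0 < d) (hzA : ∀ n, d ≤ ν A (z n)) :
    ∃ y : ℕ → Z, (∀ n, y n ∈ convexHull ℝ (z '' Ici n)) ∧
      ∃ B, MeasurableSet B ∧ 0 < μ B ∧ ∃ e > 0,
        ∀ w ∈ @closure _ (wstarTop Z) (convexHull ℝ (avgRange μ ν B)),
          ∃ᶠ n in atTop, e ≤ w (y n) := by
  obtain ⟨Λ, hΛ⟩ := exists_bidual_mapClusterPt_of_norm_le hz
  obtain ⟨T, hT⟩ := exists_clm_setIntegral_eq_apply hν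
  obtain ⟨f, hf⟩ := exists_L1_setIntegral_eq hν Λ
  obtain ⟨y, hy, hlim⟩ := exists_seq_mem_convexHull_tails_tendsto hΛ
    (bidual_comp_eq_apply_of_setIntegral_eq hT hf)
  have hfA : 0 < ∫ ω in A, f ω ∂μ := by
    rw [hf A hA]
    exact hd.trans_le (isClosed_Ici.mem_of_mapClusterPt (hΛ (ν A)) (Eventually.of_forall hzA))
  obtain ⟨B, hB, hμB, e, he, hfreq⟩ := exists_measurableSet_frequently_le_of_tendsto hlim
    fun hle => hfA.not_ge (integral_nonpos_of_ae (ae_restrict_of_ae hle))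
  exact ⟨y, hy, B, hB, hμB, e, he, fun w hw => hfreq.mono fun n hn =>
    le_apply_of_mem_closure_convexHull_avgRange_s1 (L1.integrable_coeFn _) (hT (y n)) hn hw⟩

end DensityOperator

theorem range_subset_of_efremov_of_condG_general
    {Ω : Type*} [MeasurableSpace Ω] (μ : Measure Ω) [IsFiniteMeasure μ]
    {Z : Type*} [NormedAddCommGroup Z] [NormedSpace ℝ Z]
    (X : Submodule ℝ (Z →L[ℝ] ℝ)) (hXclosed : IsClosed (X : Set (Z →L[ℝ] ℝ)))
    (hE : EfremovE ↥X)
    (ν : VectorMeasure Ω (Z →L[ℝ] ℝ))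
    (hν : ∀ A : Set Ω, μ A = 0 → ν A = 0)
    (hG : CondG μ ν X) :
    ∀ A : Set Ω, MeasurableSet A → ν A ∈ X := by
  intro A hA
  by_contra hνA
  have hrange : range X.subtypeₗᵢ = X := Subtype.range_coe
  obtain ⟨d, hd, z, hz, hzA, hzX⟩ := exists_seq_tendsto_zero_of_efremov hE X.subtypeₗᵢ
    (hrange ▸ hXclosed) (by rwa [hrange])
  obtain ⟨y, hy, B, hB, hμB, e, he, hfreq⟩ :=
    exists_seq_mem_convexHull_tails_frequently_le hν hz hA hd hzA
  obtain ⟨x, hxB, hxX⟩ := hG B hB hμB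
  have hxy : Tendsto (fun n => x (y n)) atTop (𝓝 0) :=
    tendsto_of_mem_convexHull_tails (hzX ⟨x, hxX⟩) fun n => by
      have hmem := mem_image_of_mem x.toLinearMap (hy n)
      rwa [x.toLinearMap.image_convexHull, image_image] at hmem
  obtain ⟨n, hle, hlt⟩ := ((hfreq x hxB).and_eventually (hxy.eventually_lt_const he)).exists
  exact hle.not_gt hlt

/-- If `X` has Efremov's property (E) and `ν ∈ ca(μ, Z*)` satisfies condition (G),
then `ν(Σ) ⊆ X`. -/
theorem range_subset_of_efremov_of_condG
    {Ω : Type*} [MeasurableSpace Ω] (μ : Measure Ω) [IsFiniteMeasure μ]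
    {Z : Type*} [NormedAddCommGroup Z] [NormedSpace ℝ Z] [CompleteSpace Z]
    (X : Submodule ℝ (Z →L[ℝ] ℝ)) (hXclosed : IsClosed (X : Set (Z →L[ℝ] ℝ)))
    (hXnorming : IsNorming X)
    (hE : EfremovE ↥X)
    (ν : VectorMeasure Ω (Z →L[ℝ] ℝ))
    (hν : ∀ A : Set Ω, μ A = 0 → ν A = 0)
    (hG : CondG μ ν X) :
    ∀ A : Set Ω, MeasurableSet A → ν A ∈ X := by
  exact range_subset_of_efremov_of_condG_general μ X hXclosed hE ν hν hG
end
end
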